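/- For every z with 0 ≤ z ≤ 1/2 and every y > 0, it is not the case that both j_z'(y) = 0 and j_z''(y) ≤ 0. (That is, for 0 ≤ z ≤ 1/2 the function j_z has no local maximum at any y > 0.) -/

import Mathlib

/-!
Write `P = y² - 2 y z + 1`, `τ = 1 - z y` and `u = X / y³`. Then `j = P u² (Q u - 2 τ)` and
`j' = 4 u H / y`, where `H = R u² + Q u - τ` and `R`, `Q` are polynomials in `P` and `τ`. Along the
curve `u = X / y³` one has `dH/dy = K / (y P)` with `K` another quadratic in `u`, so at a critical
point of `j` the sign of `j''` is the sign of `K`. It has to be shown that `K > 0` wherever `H = 0`.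

Three algebraic facts carry the argument.
* Where `H = 0`, the product of `K` and `H_u = 2 R u + Q` equals the Bezoutian `K H_u - H K_u`, a
  quadratic in `u` which is positive definite because the resultant of `H` and `K` has a sign
  (`resultant_neg`, `K_mul_Hu_pos`). In the variables `s = z y` and `p = y² (1 - 4 z²)`, which are
  nonnegative exactly because `0 ≤ z ≤ 1/2`, this is positivity of seven univariate polynomials.
* `H_u² = disc + 4 R H` with `disc > 0` (`Hu_sq`, `discC_pos`).
* `R / y⁵` is increasing, so `R` changes sign at most once, from negative to positive
  (`Rf_pos_mono`).

Moreover `H < 0` and `H_u < 0` for small `y > 0` (`eventually_neg`). By the first fact it suffices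
that `H_u > 0` at each zero `b` of `H` (`Vf_pos_of_Hf_eq_zero`). Suppose `H_u(b) < 0`. At the first
zero `c ≤ b` of `H` the derivative `dH/dy` is nonnegative, hence `K > 0` and `H_u > 0`. Since `H_u` has changed sign
while `H ≤ 0`, the second fact forces `R(c) > 0`, and `R > 0` from then on. As `H_u(b) < 0`, there is
a first zero `d` of `H_u` after `c`, and `H(d) < 0` by the second fact. At the last zero of `H` in
`[c, d)` the derivative of `H` is nonpositive, so `H_u < 0` there, contradicting `H_u > 0` on
`[c, d)`.
-/

open Real Topology Filter MeasureTheory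

/-- The tortoise coordinate `X z y = ∫_0^y t²/(t² - 2tz + 1) dt`. -/
noncomputable def X (z y : ℝ) : ℝ := ∫ t in (0:ℝ)..y, t ^ 2 / (t ^ 2 - 2 * t * z + 1)

/-- The function `w(x,y,z)`. -/
noncomputable def w (x y z : ℝ) : ℝ :=
  (-6 * z / y ^ 4 + (8 + 28 * z ^ 2) / y ^ 5 - (52 * z + 32 * z ^ 3) / y ^ 6
      + (20 + 76 * z ^ 2) / y ^ 7 - 54 * z / y ^ 8 + 12 / y ^ 9) * x ^ 3
    + (2 * z / y ^ 3 - (2 + 4 * z ^ 2) / y ^ 4 + 6 * z / y ^ 5 - 2 / y ^ 6) * x ^ 2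

/-- The function `j_z(y) = w(X_z(y), y, z)`. -/
noncomputable def j (z y : ℝ) : ℝ := w (X z y) y z

/-! ### The quadratics `H` and `K` and their Bezoutian -/

/-- The leading coefficient `R` of `H`, in terms of `P = y² - 2 y z + 1` and `τ = 1 - z y`. -/
def Rc (P τ : ℝ) : ℝ := -((4 + 6 * τ) * P ^ 2 + (4 * τ + 11 * τ ^ 2) * P + 2 * τ ^ 3)

/-- The linear coefficient `Q` of `H`. -/
def Qc (P τ : ℝ) : ℝ := (2 + 6 * τ) * P + 4 * τ ^ 2

/-- The quadratic `H(u) = R u² + Q u - τ`; along the curve `u = X / y³` one has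
`j' = 4 u H / y`. -/
def Hc (P τ u : ℝ) : ℝ := Rc P τ * u ^ 2 + Qc P τ * u - τ

/-- The quadratic `K(u)` with `dH/dy = K / (y P)` along the curve `u = X / y³`. -/
def Kc (P τ u : ℝ) : ℝ :=
  ((14 + 6 * τ) * P ^ 3 + (4 + 50 * τ + 46 * τ ^ 2) * P ^ 2 + (14 * τ ^ 2 + 28 * τ ^ 3) * P) * u ^ 2
    - ((16 + 12 * τ) * P ^ 2 + (20 * τ + 38 * τ ^ 2) * P + 4 * τ ^ 3) * u
    + ((3 + 5 * τ) * P + 4 * τ ^ 2)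

/-- The coefficient of `u²` in the Bezoutian `K H_u - H K_u`. -/
def alphaC (P τ : ℝ) : ℝ :=
  (36 + 48 * τ + 36 * τ ^ 2) * P ^ 4 + (-8 + 20 * τ + 48 * τ ^ 2 + 60 * τ ^ 3) * P ^ 3
    + (36 * τ ^ 2 + 80 * τ ^ 3 + 114 * τ ^ 4) * P ^ 2 + 8 * τ ^ 5 * P + 8 * τ ^ 6

/-- Half the coefficient of `u` in the Bezoutian `K H_u - H K_u`. -/
def betaC (P τ : ℝ) : ℝ :=
  -((12 + 24 * τ + 24 * τ ^ 2) * P ^ 3 + (8 * τ + 19 * τ ^ 2 + 33 * τ ^ 3) * P ^ 2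
    + (8 * τ ^ 3 + 26 * τ ^ 4) * P + 8 * τ ^ 5)

/-- The discriminant `Q² + 4 R τ` of `H`. -/
def discC (P τ : ℝ) : ℝ :=
  (4 + 8 * τ + 12 * τ ^ 2) * P ^ 2 + 4 * τ ^ 3 * P + 8 * τ ^ 4

theorem discC_pos {P : ℝ} (τ : ℝ) (hP : 0 < P) : 0 < discC P τ := by
  have h : discC P τ = 4 * (P * (1 + τ)) ^ 2 + 4 * τ ^ 2 * ((P + τ / 2) ^ 2 + P ^ 2
      + 7 / 4 * τ ^ 2) := by unfold discC; ring
  rcases eq_or_ne τ 0 with rfl | hτ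
  · rw [h]; positivity
  · rw [h]; positivity

/-- Completing the square: `H_u² = disc + 4 R H`. -/
theorem Hu_sq (P τ u : ℝ) :
    (2 * Rc P τ * u + Qc P τ) ^ 2 = discC P τ + 4 * Rc P τ * Hc P τ u := by
  unfold discC Hc Rc Qc; ring

/-- The Bezoutian of `H` and `K`, whose value at `u = 0` is `3/2` times the discriminant of `H`;
where `H` vanishes it equals `K H_u`. -/
theorem bezout_identity (P τ u : ℝ) (hH : Hc P τ u = 0) :
    Kc P τ u * (2 * Rc P τ * u + Qc P τ)
      = alphaC P τ * u ^ 2 + 2 * betaC P τ * u + 3 / 2 * discC P τ := by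
  have h : Kc P τ u * (2 * Rc P τ * u + Qc P τ)
      = alphaC P τ * u ^ 2 + 2 * betaC P τ * u + 3 / 2 * discC P τ
        + Hc P τ u * (2 * ((14 + 6 * τ) * P ^ 3 + (4 + 50 * τ + 46 * τ ^ 2) * P ^ 2
            + (14 * τ ^ 2 + 28 * τ ^ 3) * P) * u
          - ((16 + 12 * τ) * P ^ 2 + (20 * τ + 38 * τ ^ 2) * P + 4 * τ ^ 3)) := by
    unfold Kc alphaC betaC discC Hc Rc Qc; ring
  rw [h, hH]; ring

/-! ### Positivity of the coefficients of the resultant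

Each of the seven polynomials `f` below is positive on `s ≥ 0`: a positive multiple of `f` is written
as a sum of two squares plus a polynomial with nonnegative coefficients. The squares come from a
numerical factorization `f ≈ |g|²` over `ℂ`, with the coefficients rounded to integers. -/

theorem coeff0_pos (s : ℝ) (hs : 0 ≤ s) :
    0 < 294912 * s ^ 14 - 2359296 * s ^ 13 + 8854272 * s ^ 12 - 19906560 * s ^ 11 + 29983680 *
      s ^ 10 - 32630400 * s ^ 9 + 27208512 * s ^ 8 - 17932032 * s ^ 7 + 9539388 * s ^ 6 -
      4139208 * s ^ 5 + 1468071 * s ^ 4 - 420372 * s ^ 3 + 93222 * s ^ 2 - 14580 * s + 1215 := by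
  have hsq : 0 ≤ (102381 * s ^ 7 - 280924 * s ^ 6 - 329490 * s ^ 5 + 1191812 * s ^ 4 - 765715 * s ^ 3 +
      77975 * s ^ 2 + 43546 * s - 6968) ^ 2
      + (36255 * s ^ 7 - 508211 * s ^ 6 + 1164469 * s ^ 5 - 577057 * s ^ 4 - 349561 * s ^ 3 +
      311553 * s ^ 2 - 55250 * s - 214) ^ 2 := by positivity
  have hrem : 0 < 185814 * s ^ 14 + 1099698 * s ^ 13 + 5549893 * s ^ 12 + 10806724 * s ^ 11 + 15249401 *
      s ^ 10 + 20290184 * s ^ 9 + 13913539 * s ^ 8 + 9688256 * s ^ 7 + 5060104 * s ^ 6 +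
      3021604 * s ^ 5 + 739482 * s ^ 4 + 111452 * s ^ 3 + 67668 * s ^ 2 + 10056 * s + 1180 := by
    positivity
  linarith

theorem coeff1_pos (s : ℝ) (hs : 0 ≤ s) :
    0 < 442368 * s ^ 14 - 3391488 * s ^ 13 + 12122880 * s ^ 12 - 25478400 * s ^ 11 + 35043168
      * s ^ 10 - 34042560 * s ^ 9 + 24955752 * s ^ 8 - 14205408 * s ^ 7 + 6414672 * s ^ 6 -
      2316408 * s ^ 5 + 672348 * s ^ 4 - 156288 * s ^ 3 + 28464 * s ^ 2 - 3888 * s + 324 := by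
  have hsq : 0 ≤ (4450 * s ^ 7 - 868 * s ^ 6 - 43108 * s ^ 5 + 63148 * s ^ 4 - 21862 * s ^ 3 - 3049 * s
      ^ 2 + 2053 * s - 135) ^ 2
      + (4942 * s ^ 7 - 33537 * s ^ 6 + 47575 * s ^ 5 + 589 * s ^ 4 - 27752 * s ^ 3 + 11239 * s
      ^ 2 - 695 * s - 119) ^ 2 := by positivity
  have hrem : 0 < 10936 * s ^ 14 + 56108 * s ^ 13 + 234107 * s ^ 12 + 531186 * s ^ 11 + 640593 * s ^ 10
      + 728362 * s ^ 9 + 456285 * s ^ 8 + 296048 * s ^ 7 + 98146 * s ^ 6 + 70892 * s ^ 5 +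
      3512 * s ^ 4 + 4888 * s ^ 3 + 218 * s ^ 2 + 100 * s + 14 := by positivity
  linarith

theorem coeff2_pos (s : ℝ) (hs : 0 ≤ s) :
    0 < 276480 * s ^ 12 - 2027520 * s ^ 11 + 6883872 * s ^ 10 - 13419456 * s ^ 9 + 16579484 *
      s ^ 8 - 13987432 * s ^ 7 + 8716358 * s ^ 6 - 4088104 * s ^ 5 + 1471160 * s ^ 4 -
      401440 * s ^ 3 + 81854 * s ^ 2 - 11680 * s + 944 := by
  have hsq : 0 ≤ (799 * s ^ 6 - 965 * s ^ 5 - 4059 * s ^ 4 + 6646 * s ^ 3 - 2394 * s ^ 2 + 20 * s + 49) ^ 2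
      + (683 * s ^ 6 - 4813 * s ^ 5 + 7261 * s ^ 4 - 1673 * s ^ 3 - 1737 * s ^ 2 + 658 * s - 37) ^ 2 := by
    positivity
  have hrem : 0 < 1030 * s ^ 12 + 6548 * s ^ 11 + 7050 * s ^ 10 + 47702 * s ^ 9 + 41170 * s ^ 8 + 26236
      * s ^ 7 + 32157 * s ^ 6 + 1922 * s ^ 5 + 7159 * s ^ 4 + 782 * s ^ 3 + 126 * s ^ 2 + 12
      * s + 6 := by positivity
  linarith

theorem coeff3_pos (s : ℝ) (hs : 0 ≤ s) :
    0 < 92160 * s ^ 10 - 645120 * s ^ 9 + 2074032 * s ^ 8 - 3712752 * s ^ 7 + 4023592 * s ^ 6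
      - 2818616 * s ^ 5 + 1413940 * s ^ 4 - 501040 * s ^ 3 + 127280 * s ^ 2 - 20824 * s +
      1908 := by
  have hsq : 0 ≤ (586 * s ^ 5 - 1644 * s ^ 4 - 28 * s ^ 3 + 1935 * s ^ 2 - 776 * s + 43) ^ 2
      + (157 * s ^ 5 - 2089 * s ^ 4 + 3989 * s ^ 3 - 1787 * s ^ 2 - 109 * s + 76) ^ 2 := by positivity
  have hrem : 0 < 595 * s ^ 10 + 2234 * s ^ 9 + 9741 * s ^ 8 + 16268 * s ^ 7 + 21355 * s ^ 6 + 9432 * s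
      ^ 5 + 3224 * s ^ 4 + 5474 * s ^ 3 + 277 * s ^ 2 + 8 * s + 7 := by positivity
  linarith

theorem coeff4_pos (s : ℝ) (hs : 0 ≤ s) :
    0 < 17280 * s ^ 8 - 115200 * s ^ 7 + 349467 * s ^ 6 - 566868 * s ^ 5 + 519242 * s ^ 4 -
      277036 * s ^ 3 + 101003 * s ^ 2 - 21648 * s + 2760 := by
  have hsq : 0 ≤ (80 * s ^ 4 - 13 * s ^ 3 - 416 * s ^ 2 + 337 * s - 36) ^ 2
      + (104 * s ^ 4 - 544 * s ^ 3 + 575 * s ^ 2 - 34 * s - 38) ^ 2 := by positivity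
  have hrem : 0 < 64 * s ^ 8 + 32 * s ^ 7 + 322 * s ^ 6 + 1068 * s ^ 5 + 995 * s ^ 4 + 168 * s ^ 3 + 26
      * s ^ 2 + 32 * s + 20 := by positivity
  linarith

theorem coeff5_pos (s : ℝ) (hs : 0 ≤ s) :
    0 < 1728 * s ^ 6 - 10944 * s ^ 5 + 31200 * s ^ 4 - 45024 * s ^ 3 + 32664 * s ^ 2 - 10536 *
      s + 2160 := by
  have hsq : 0 ≤ (38 * s ^ 3 - 91 * s ^ 2 + 17 * s + 31) ^ 2
      + (16 * s ^ 3 - 127 * s ^ 2 + 171 * s - 34) ^ 2 := by positivity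
  have hrem : 0 < 28 * s ^ 6 + 36 * s ^ 5 + 26 * s ^ 4 + 236 * s ^ 3 + 140 * s ^ 2 + 38 * s + 43 := by
    positivity
  linarith

theorem coeff6_pos (s : ℝ) (hs : 0 ≤ s) :
    0 < 72 * s ^ 4 - 432 * s ^ 3 + 1152 * s ^ 2 - 1440 * s + 720 := by
  have hsq : 0 ≤ (12 * s ^ 2 - 16 * s - 8) ^ 2
      + (12 * s ^ 2 - 57 * s + 53) ^ 2 := by positivity
  have hrem : 0 < 24 * s ^ 3 + 23 * s ^ 2 + 26 * s + 7 := by positivity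
  linarith

/-- In the variables `s = z y` and `p = y² (1 - 4 z²)`, so that `P = 1 - 2 s + 4 s² + p` and
`τ = 1 - s`, the negated resultant of `H` and `K` (up to the factor `3/2` built into `discC`) has
positive coefficients as a polynomial in `p`, apart from a factor `s²` in the constant one. -/
theorem resultant_neg {s p : ℝ} (hs : 0 ≤ s) (hp : 0 ≤ p) (hsp : 0 < s ∨ 0 < p) :
    betaC (1 - 2 * s + 4 * s ^ 2 + p) (1 - s) ^ 2
      < alphaC (1 - 2 * s + 4 * s ^ 2 + p) (1 - s)
        * (3 / 2 * discC (1 - 2 * s + 4 * s ^ 2 + p) (1 - s)) := by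
  have h : alphaC (1 - 2 * s + 4 * s ^ 2 + p) (1 - s)
        * (3 / 2 * discC (1 - 2 * s + 4 * s ^ 2 + p) (1 - s))
      - betaC (1 - 2 * s + 4 * s ^ 2 + p) (1 - s) ^ 2
      = (294912 * s ^ 14 - 2359296 * s ^ 13 + 8854272 * s ^ 12 - 19906560 * s ^ 11 +
        29983680 * s ^ 10 - 32630400 * s ^ 9 + 27208512 * s ^ 8 - 17932032 * s ^ 7 + 9539388
        * s ^ 6 - 4139208 * s ^ 5 + 1468071 * s ^ 4 - 420372 * s ^ 3 + 93222 * s ^ 2 - 14580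
        * s + 1215) * s ^ 2
      + (442368 * s ^ 14 - 3391488 * s ^ 13 + 12122880 * s ^ 12 - 25478400 * s ^ 11 +
        35043168 * s ^ 10 - 34042560 * s ^ 9 + 24955752 * s ^ 8 - 14205408 * s ^ 7 + 6414672
        * s ^ 6 - 2316408 * s ^ 5 + 672348 * s ^ 4 - 156288 * s ^ 3 + 28464 * s ^ 2 - 3888 *
        s + 324) * p
      + (276480 * s ^ 12 - 2027520 * s ^ 11 + 6883872 * s ^ 10 - 13419456 * s ^ 9 + 16579484
        * s ^ 8 - 13987432 * s ^ 7 + 8716358 * s ^ 6 - 4088104 * s ^ 5 + 1471160 * s ^ 4 -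
        401440 * s ^ 3 + 81854 * s ^ 2 - 11680 * s + 944) * p ^ 2
      + (92160 * s ^ 10 - 645120 * s ^ 9 + 2074032 * s ^ 8 - 3712752 * s ^ 7 + 4023592 * s ^
        6 - 2818616 * s ^ 5 + 1413940 * s ^ 4 - 501040 * s ^ 3 + 127280 * s ^ 2 - 20824 * s
        + 1908) * p ^ 3
      + (17280 * s ^ 8 - 115200 * s ^ 7 + 349467 * s ^ 6 - 566868 * s ^ 5 + 519242 * s ^ 4 -
        277036 * s ^ 3 + 101003 * s ^ 2 - 21648 * s + 2760) * p ^ 4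
      + (1728 * s ^ 6 - 10944 * s ^ 5 + 31200 * s ^ 4 - 45024 * s ^ 3 + 32664 * s ^ 2 -
        10536 * s + 2160) * p ^ 5
      + (72 * s ^ 4 - 432 * s ^ 3 + 1152 * s ^ 2 - 1440 * s + 720) * p ^ 6 := by
    unfold alphaC betaC discC; ring
  have hpoly : ∀ c₀ c₁ c₂ c₃ c₄ c₅ c₆ : ℝ, 0 < c₀ → 0 < c₁ → 0 < c₂ → 0 < c₃ → 0 < c₄ → 0 < c₅ →
      0 < c₆ → 0 < c₀ * s ^ 2 + c₁ * p + c₂ * p ^ 2 + c₃ * p ^ 3 + c₄ * p ^ 4 + c₅ * p ^ 5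
        + c₆ * p ^ 6 := by
    intro c₀ c₁ c₂ c₃ c₄ c₅ c₆ h₀ h₁ h₂ h₃ h₄ h₅ h₆
    rcases hsp with hs' | hp' <;> positivity
  rw [← sub_pos, h]
  exact hpoly _ _ _ _ _ _ _ (coeff0_pos s hs) (coeff1_pos s hs) (coeff2_pos s hs)
    (coeff3_pos s hs) (coeff4_pos s hs) (coeff5_pos s hs) (coeff6_pos s hs)

/-- Where `H` vanishes, `K` and `H_u` have the same sign: the Bezoutian is a positive definite
quadratic form. -/
theorem K_mul_Hu_pos {z y u : ℝ} (hz0 : 0 ≤ z) (hz1 : z ≤ 1 / 2) (hy : 0 < y)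
    (hP : 0 < y ^ 2 - 2 * y * z + 1)
    (hH : Hc (y ^ 2 - 2 * y * z + 1) (1 - z * y) u = 0) :
    0 < Kc (y ^ 2 - 2 * y * z + 1) (1 - z * y) u
      * (2 * Rc (y ^ 2 - 2 * y * z + 1) (1 - z * y) * u
        + Qc (y ^ 2 - 2 * y * z + 1) (1 - z * y)) := by
  rw [bezout_identity _ _ _ hH]
  have hp : 0 ≤ y ^ 2 * (1 - 4 * z ^ 2) := by
    have : 0 ≤ 1 - 4 * z ^ 2 := by nlinarith
    positivity
  have hsp : 0 < z * y ∨ 0 < y ^ 2 * (1 - 4 * z ^ 2) := by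
    rcases hz0.eq_or_lt with rfl | h
    · right; norm_num; positivity
    · left; positivity
  have hres := resultant_neg (mul_nonneg hz0 hy.le) hp hsp
  have hPeq : 1 - 2 * (z * y) + 4 * (z * y) ^ 2 + y ^ 2 * (1 - 4 * z ^ 2)
      = y ^ 2 - 2 * y * z + 1 := by ring
  rw [hPeq] at hres
  have hD := discC_pos (1 - z * y) hP
  set a := alphaC (y ^ 2 - 2 * y * z + 1) (1 - z * y)
  set b := betaC (y ^ 2 - 2 * y * z + 1) (1 - z * y)
  set d := discC (y ^ 2 - 2 * y * z + 1) (1 - z * y)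
  have h1 : 0 < (3 / 2 * d) * (a * u ^ 2 + 2 * b * u + 3 / 2 * d) := by
    have h2 : (3 / 2 * d) * (a * u ^ 2 + 2 * b * u + 3 / 2 * d)
        = (b * u + 3 / 2 * d) ^ 2 + (a * (3 / 2 * d) - b ^ 2) * u ^ 2 := by ring
    rw [h2]
    have h3 := sub_pos.2 hres
    rcases eq_or_ne u 0 with rfl | hu
    · norm_num; positivity
    · positivity
  exact pos_of_mul_pos_right h1 (by positivity)

/-- `R / y⁵` is increasing in `y`; the left-hand side is `y R' - 5 R`. -/
theorem R_growth {z y : ℝ} (hz0 : 0 ≤ z) (hz1 : z ≤ 1 / 2)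
    (hP : 0 < y ^ 2 - 2 * y * z + 1) :
    0 < 10 * (y ^ 2 - 2 * y * z + 1) ^ 2
      + (4 + 46 * (1 - z * y) + 35 * (1 - z * y) ^ 2) * (y ^ 2 - 2 * y * z + 1)
      + 14 * (1 - z * y) ^ 2 + 26 * (1 - z * y) ^ 3 := by
  have hdom : 4 * (1 - z * y) ^ 2 - 6 * (1 - z * y) + 3 ≤ y ^ 2 - 2 * y * z + 1 := by
    have : 0 ≤ 1 - 4 * z ^ 2 := by nlinarith
    nlinarith [mul_nonneg this (sq_nonneg y)]
  set P := y ^ 2 - 2 * y * z + 1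
  rcases le_or_gt 0 (1 - z * y) with h | h
  · set τ := 1 - z * y
    positivity
  · obtain ⟨a, ha⟩ : ∃ a, a = -(1 - z * y) := ⟨_, rfl⟩
    have hτ : 1 - z * y = -a := by linarith
    rw [hτ] at hdom h ⊢
    have ha0 : 0 < a := by linarith
    have h1 : 0 ≤ P * (10 * (P - (4 * a ^ 2 + 6 * a + 3))) := by
      apply mul_nonneg hP.le; nlinarith
    have h2 : 0 ≤ (75 * a ^ 2) * (P - 6 * a) := by
      apply mul_nonneg (by positivity); nlinarith [sq_nonneg a]
    have h3 : 0 < P * (34 + 14 * a) := by positivity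
    have h4 : 0 < a ^ 3 := by positivity
    nlinarith [sq_nonneg a]

/-! ### The curve `u = X / y³` -/

theorem P_pos {z : ℝ} (hz0 : 0 ≤ z) (hz1 : z ≤ 1 / 2) (y : ℝ) : 0 < y ^ 2 - 2 * y * z + 1 := by
  nlinarith [sq_nonneg (y - z)]

theorem hasDerivAt_X {z : ℝ} (hz0 : 0 ≤ z) (hz1 : z ≤ 1 / 2) (y : ℝ) :
    HasDerivAt (X z) (y ^ 2 / (y ^ 2 - 2 * y * z + 1)) y := by
  have hc : Continuous fun t : ℝ => t ^ 2 / (t ^ 2 - 2 * t * z + 1) :=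
    Continuous.div (by fun_prop) (by fun_prop) fun t => (P_pos hz0 hz1 t).ne'
  exact intervalIntegral.integral_hasDerivAt_right (hc.intervalIntegrable _ _)
    (hc.stronglyMeasurableAtFilter _ _) hc.continuousAt

theorem X_zero (z : ℝ) : X z 0 = 0 := by simp [X]

theorem X_pos {z y : ℝ} (hz0 : 0 ≤ z) (hz1 : z ≤ 1 / 2) (hy : 0 < y) : 0 < X z y := by
  have hm : StrictMonoOn (X z) (Set.Ici 0) := by
    apply strictMonoOn_of_deriv_pos (convex_Ici 0)
    · exact fun t _ => (hasDerivAt_X hz0 hz1 t).continuousAt.continuousWithinAt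
    · intro t ht
      rw [interior_Ici] at ht
      rw [(hasDerivAt_X hz0 hz1 t).deriv]
      have : 0 < t := ht
      have := P_pos hz0 hz1 t
      positivity
  simpa [X_zero] using hm (Set.mem_Ici.2 le_rfl) (Set.mem_Ici.2 hy.le) hy

/-- A Taylor-type polynomial lower bound for `X z y`, obtained by integrating
`t² (1 + 2 z t + (4 z² - 1) t² - 3 t³) ≤ t² / (t² - 2 t z + 1)`. -/
theorem X_lower {z y : ℝ} (hz0 : 0 ≤ z) (hz1 : z ≤ 1 / 2) (hy : 0 ≤ y) :
    y ^ 3 * (1 / 3 + z * y / 2 + y ^ 2 * ((4 * z ^ 2 - 1) / 5 - y / 2)) ≤ X z y := by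
  have hd : ∀ t : ℝ, HasDerivAt
      (fun t => X z t - t ^ 3 * (1 / 3 + z * t / 2 + t ^ 2 * ((4 * z ^ 2 - 1) / 5 - t / 2)))
      (t ^ 2 / (t ^ 2 - 2 * t * z + 1)
        - t ^ 2 * (1 + 2 * z * t + (4 * z ^ 2 - 1) * t ^ 2 - 3 * t ^ 3)) t := by
    intro t
    have h1 := hasDerivAt_id' t
    have h2 := ((h1.pow 3).mul (((h1.const_mul z).div_const 2).const_add (1 / 3) |>.add
      ((h1.pow 2).mul ((h1.div_const 2).const_sub ((4 * z ^ 2 - 1) / 5)))))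
    refine ((hasDerivAt_X hz0 hz1 t).sub h2).congr_deriv ?_
    simp
    ring
  have hm : MonotoneOn
      (fun t => X z t - t ^ 3 * (1 / 3 + z * t / 2 + t ^ 2 * ((4 * z ^ 2 - 1) / 5 - t / 2)))
      (Set.Ici 0) := by
    apply monotoneOn_of_deriv_nonneg (convex_Ici 0)
    · exact fun t _ => (hd t).continuousAt.continuousWithinAt
    · exact fun t _ => (hd t).differentiableAt.differentiableWithinAt
    · intro t ht
      rw [interior_Ici] at ht
      have ht : 0 < t := ht
      rw [(hd t).deriv]
      have hP := P_pos hz0 hz1 t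
      rw [sub_nonneg, le_div_iff₀ hP, mul_assoc]
      apply mul_le_of_le_one_right (by positivity)
      -- The product equals `1 - t³ (3 P + 8 z³ - 4 z) - (1 - 4 z²) t⁴`, and `P ≥ 3 / 4`.
      have h1 : 0 ≤ 3 * (t ^ 2 - 2 * t * z + 1) + 8 * z ^ 3 - 4 * z := by
        have : 0 ≤ z ^ 3 := by positivity
        nlinarith [sq_nonneg (t - z)]
      have h2 : 0 ≤ 1 - 4 * z ^ 2 := by nlinarith
      have h3 := mul_nonneg (pow_pos ht 3).le h1
      have h4 := mul_nonneg (pow_pos ht 4).le h2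
      nlinarith
  have := hm (Set.mem_Ici.2 le_rfl) (Set.mem_Ici.2 hy) hy
  simp only [X_zero] at this
  linarith

/-- The rescaled tortoise coordinate `u = X / y³`. -/
noncomputable def U (z y : ℝ) : ℝ := X z y / y ^ 3

theorem U_pos {z y : ℝ} (hz0 : 0 ≤ z) (hz1 : z ≤ 1 / 2) (hy : 0 < y) : 0 < U z y :=
  div_pos (X_pos hz0 hz1 hy) (by positivity)

theorem hasDerivAt_U {z y : ℝ} (hz0 : 0 ≤ z) (hz1 : z ≤ 1 / 2) (hy : 0 < y) :
    HasDerivAt (U z) ((1 / (y ^ 2 - 2 * y * z + 1) - 3 * U z y) / y) y := by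
  have hP := P_pos hz0 hz1 y
  refine ((hasDerivAt_X hz0 hz1 y).div (hasDerivAt_pow 3 y) (by positivity)).congr_deriv ?_
  unfold U
  field_simp
  ring

/-- `R` as a function of `y`. -/
def Rf (z y : ℝ) : ℝ := Rc (y ^ 2 - 2 * y * z + 1) (1 - z * y)

/-- `H` along the curve `u = X / y³`. -/
noncomputable def Hf (z y : ℝ) : ℝ := Hc (y ^ 2 - 2 * y * z + 1) (1 - z * y) (U z y)

/-- `K` along the curve `u = X / y³`. -/
noncomputable def Kf (z y : ℝ) : ℝ := Kc (y ^ 2 - 2 * y * z + 1) (1 - z * y) (U z y)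

/-- `H_u = 2 R u + Q` along the curve `u = X / y³`. -/
noncomputable def Vf (z y : ℝ) : ℝ :=
  2 * Rf z y * U z y + Qc (y ^ 2 - 2 * y * z + 1) (1 - z * y)

theorem hasDerivAt_P (z y : ℝ) :
    HasDerivAt (fun y => y ^ 2 - 2 * y * z + 1) (2 * y - 2 * z) y := by
  have h1 := hasDerivAt_id' y
  refine (((h1.pow 2).sub ((h1.const_mul 2).mul_const z)).add_const 1).congr_deriv ?_
  simp

theorem hasDerivAt_tau (z y : ℝ) : HasDerivAt (fun y => 1 - z * y) (-z) y := by
  have h1 := hasDerivAt_id' y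
  exact ((h1.const_mul z).const_sub 1).congr_deriv (by simp)

theorem hasDerivAt_Rf (z y : ℝ) : HasDerivAt (Rf z)
    (-((6 * -z) * (y ^ 2 - 2 * y * z + 1) ^ 2
      + (4 + 6 * (1 - z * y)) * (2 * (y ^ 2 - 2 * y * z + 1) * (2 * y - 2 * z))
      + (4 * -z + 11 * (2 * (1 - z * y) * -z)) * (y ^ 2 - 2 * y * z + 1)
      + (4 * (1 - z * y) + 11 * (1 - z * y) ^ 2) * (2 * y - 2 * z)
      + 2 * (3 * (1 - z * y) ^ 2 * -z))) y := by
  have hP := hasDerivAt_P z y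
  have hT := hasDerivAt_tau z y
  have h := (((((hT.const_mul 6).const_add 4).mul (hP.pow 2)).add
    (((hT.const_mul 4).add ((hT.pow 2).const_mul 11)).mul hP)).add ((hT.pow 3).const_mul 2)).neg
  refine h.congr_deriv ?_
  simp
  ring

theorem hasDerivAt_Qf (z y : ℝ) :
    HasDerivAt (fun y => Qc (y ^ 2 - 2 * y * z + 1) (1 - z * y))
      ((6 * -z) * (y ^ 2 - 2 * y * z + 1) + (2 + 6 * (1 - z * y)) * (2 * y - 2 * z)
        + 4 * (2 * (1 - z * y) * -z)) y := by
  have hP := hasDerivAt_P z y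
  have hT := hasDerivAt_tau z y
  have h := ((((hT.const_mul 6).const_add 2).mul hP).add ((hT.pow 2).const_mul 4))
  refine h.congr_deriv ?_
  simp

theorem hasDerivAt_Hf {z y : ℝ} (hz0 : 0 ≤ z) (hz1 : z ≤ 1 / 2) (hy : 0 < y) :
    HasDerivAt (Hf z) (Kf z y / (y * (y ^ 2 - 2 * y * z + 1))) y := by
  have hPp := P_pos hz0 hz1 y
  have hU := hasDerivAt_U hz0 hz1 hy
  have h := (((hasDerivAt_Rf z y).mul (hU.pow 2)).add ((hasDerivAt_Qf z y).mul hU)).sub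
    (hasDerivAt_tau z y)
  refine h.congr_deriv ?_
  simp only [Kf, Kc, Rf, Rc, Qc, Pi.pow_apply]
  generalize U z y = u
  obtain ⟨P, hP⟩ : ∃ P, P = y ^ 2 - 2 * y * z + 1 := ⟨_, rfl⟩
  rw [← hP] at hPp ⊢
  field_simp
  rw [hP]
  ring

theorem j_eq {z y : ℝ} (hy : 0 < y) :
    j z y = (y ^ 2 - 2 * y * z + 1) * U z y ^ 2
      * (Qc (y ^ 2 - 2 * y * z + 1) (1 - z * y) * U z y - 2 * (1 - z * y)) := by
  unfold j w U Qc
  field_simp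
  ring

theorem hasDerivAt_j {z y : ℝ} (hz0 : 0 ≤ z) (hz1 : z ≤ 1 / 2) (hy : 0 < y) :
    HasDerivAt (j z) (4 * U z y / y * Hf z y) y := by
  have hPp := P_pos hz0 hz1 y
  have hU := hasDerivAt_U hz0 hz1 hy
  have h := ((hasDerivAt_P z y).mul (hU.pow 2)).mul
    (((hasDerivAt_Qf z y).mul hU).sub ((hasDerivAt_tau z y).const_mul 2))
  have he : j z =ᶠ[𝓝 y] fun y => (y ^ 2 - 2 * y * z + 1) * U z y ^ 2
      * (Qc (y ^ 2 - 2 * y * z + 1) (1 - z * y) * U z y - 2 * (1 - z * y)) :=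
    (eventually_gt_nhds hy).mono fun t ht => j_eq ht
  refine (HasDerivAt.congr_of_eventuallyEq h he).congr_deriv ?_
  simp only [Hf, Hc, Rc, Qc, Pi.pow_apply, Pi.mul_apply, Pi.sub_apply]
  generalize U z y = u
  obtain ⟨P, hP⟩ : ∃ P, P = y ^ 2 - 2 * y * z + 1 := ⟨_, rfl⟩
  rw [← hP] at hPp ⊢
  field_simp
  rw [hP]
  ring

/-! ### Signs along the curve -/

/-- Once positive, `R` stays positive, because `R / y⁵` is increasing. -/
theorem Rf_pos_mono {z a b : ℝ} (hz0 : 0 ≤ z) (hz1 : z ≤ 1 / 2) (ha : 0 < a) (hab : a ≤ b)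
    (hR : 0 < Rf z a) : 0 < Rf z b := by
  have hm : StrictMonoOn (fun y => Rf z y / y ^ 5) (Set.Ioi 0) := by
    have hd : ∀ y : ℝ, 0 < y → ∃ d, 0 < d ∧ HasDerivAt (fun y => Rf z y / y ^ 5) d y := by
      intro y hy
      refine ⟨_, ?_, (hasDerivAt_Rf z y).div (hasDerivAt_pow 5 y) (by positivity)⟩
      apply div_pos _ (by positivity)
      have h := mul_pos (pow_pos hy 4) (R_growth hz0 hz1 (P_pos hz0 hz1 y))
      refine h.trans_eq ?_
      unfold Rf Rc
      norm_num
      ring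
    apply strictMonoOn_of_deriv_pos (convex_Ioi 0)
    · intro y hy
      obtain ⟨d, -, h⟩ := hd y hy
      exact h.continuousAt.continuousWithinAt
    · intro y hy
      rw [interior_Ioi] at hy
      obtain ⟨d, hd0, h⟩ := hd y hy
      rwa [h.deriv]
  have hb : 0 < b := ha.trans_le hab
  have h1 := hm.monotoneOn (Set.mem_Ioi.2 ha) (Set.mem_Ioi.2 hb) hab
  have h2 : 0 < Rf z a / a ^ 5 := by positivity
  exact (div_pos_iff_of_pos_right (by positivity)).1 (h2.trans_le h1)

/-- Where `H` vanishes, `K` and `H_u` are nonzero of the same sign. -/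
theorem Kf_mul_Vf_pos {z y : ℝ} (hz0 : 0 ≤ z) (hz1 : z ≤ 1 / 2) (hy : 0 < y) (h : Hf z y = 0) :
    0 < Kf z y * Vf z y :=
  K_mul_Hu_pos hz0 hz1 hy (P_pos hz0 hz1 y) h

theorem Vf_sq (z y : ℝ) :
    Vf z y ^ 2 = discC (y ^ 2 - 2 * y * z + 1) (1 - z * y) + 4 * Rf z y * Hf z y :=
  Hu_sq _ _ _

theorem continuousAt_Vf {z y : ℝ} (hz0 : 0 ≤ z) (hz1 : z ≤ 1 / 2) (hy : 0 < y) :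
    ContinuousAt (Vf z) y :=
  (((hasDerivAt_Rf z y).continuousAt.const_mul 2).mul (hasDerivAt_U hz0 hz1 hy).continuousAt).add
    (hasDerivAt_Qf z y).continuousAt

/-- `H` and `H_u` are negative for small `y > 0`. With `u₀ ≤ u` the polynomial lower bound of
`X_lower`, `H(u₀) = y² G` where `G → -1/45 + z²/180 < 0`, while `R → -27` and
`2 R u₀ + Q → -6`, so that `H` is decreasing to the right of `u₀`. -/
theorem eventually_neg {z : ℝ} (hz0 : 0 ≤ z) (hz1 : z ≤ 1 / 2) :
    ∀ᶠ y in 𝓝[>] (0 : ℝ), Hf z y < 0 ∧ Vf z y < 0 := by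
  let e : ℝ → ℝ := fun y => (4 * z ^ 2 - 1) / 5 - y / 2
  let u₀ : ℝ → ℝ := fun y => 1 / 3 + z * y / 2 + y ^ 2 * e y
  let G : ℝ → ℝ := fun y =>
    (6 * z * y ^ 3 - (10 + 35 * z ^ 2) * y ^ 2 + (78 * z + 48 * z ^ 3) * y - (35 + 133 * z ^ 2))
        * u₀ y ^ 2 + (-6 * z * y + (8 + 16 * z ^ 2)) * u₀ y
      + z ^ 2 * (57 / 4 + 27 * z * y)
      + e y * ((-27 + 108 * z * y) * (2 * (1 / 3 + z * y / 2) + y ^ 2 * e y) + 12 - 30 * z * y)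
  have hG : ∀ᶠ y in 𝓝[>] (0 : ℝ), G y < 0 := by
    have hc : Continuous G := by fun_prop
    refine nhdsWithin_le_nhds (hc.continuousAt.eventually_lt_const (?_ : G 0 < 0))
    simp only [G, u₀, e]
    nlinarith
  have hR : ∀ᶠ y in 𝓝[>] (0 : ℝ), Rf z y < 0 := by
    refine nhdsWithin_le_nhds
      ((hasDerivAt_Rf z 0).continuousAt.eventually_lt_const (?_ : Rf z 0 < 0))
    simp only [Rf, Rc]
    norm_num
  have hV : ∀ᶠ y in 𝓝[>] (0 : ℝ),
      2 * Rf z y * u₀ y + Qc (y ^ 2 - 2 * y * z + 1) (1 - z * y) < 0 := by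
    have hc : Continuous fun y =>
        2 * Rf z y * u₀ y + Qc (y ^ 2 - 2 * y * z + 1) (1 - z * y) := by
      unfold Rf Rc Qc; fun_prop
    refine nhdsWithin_le_nhds (hc.continuousAt.eventually_lt_const ?_)
    simp only [Rf, Rc, Qc, u₀, e]
    norm_num
  filter_upwards [hG, hR, hV, self_mem_nhdsWithin] with y hG hR hV hy
  have hy : 0 < y := hy
  have hu : u₀ y ≤ U z y := by
    unfold U
    rw [le_div_iff₀ (by positivity), mul_comm]
    exact X_lower hz0 hz1 hy.le
  have hH₀ : Hc (y ^ 2 - 2 * y * z + 1) (1 - z * y) (u₀ y) = y ^ 2 * G y := by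
    simp only [Hc, Rc, Qc, G, u₀, e]
    ring
  have hdiff : Hf z y = y ^ 2 * G y + (U z y - u₀ y)
      * ((2 * Rf z y * u₀ y + Qc (y ^ 2 - 2 * y * z + 1) (1 - z * y))
        + Rf z y * (U z y - u₀ y)) := by
    rw [← hH₀]
    simp only [Hf, Hc, Rf]
    ring
  have h1 : Rf z y * (U z y - u₀ y) ≤ 0 :=
    mul_nonpos_of_nonpos_of_nonneg hR.le (sub_nonneg.2 hu)
  constructor
  · have h2 : y ^ 2 * G y < 0 := mul_neg_of_pos_of_neg (by positivity) hG
    have h3 := mul_nonpos_of_nonneg_of_nonpos (sub_nonneg.2 hu)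
      (add_nonpos hV.le h1)
    linarith
  · unfold Vf
    linarith

/-! ### Critical points of `j` -/

theorem exists_first_zero {f : ℝ → ℝ} {a b : ℝ} (hab : a ≤ b) (hf : ContinuousOn f (Set.Icc a b))
    (ha : f a < 0) (hb : 0 ≤ f b) :
    ∃ c, a < c ∧ c ≤ b ∧ f c = 0 ∧ ∀ t, a ≤ t → t < c → f t < 0 := by
  let S := Set.Icc a b ∩ f ⁻¹' Set.Ici 0
  have hS : IsClosed S := hf.preimage_isClosed_of_isClosed isClosed_Icc isClosed_Ici
  have hbS : b ∈ S := ⟨⟨hab, le_rfl⟩, hb⟩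
  have hbdd : BddBelow S := ⟨a, fun t ht => ht.1.1⟩
  have hcS := hS.csInf_mem ⟨b, hbS⟩ hbdd
  set c := sInf S
  have hbefore : ∀ t, a ≤ t → t < c → f t < 0 := by
    intro t hat htc
    by_contra h
    exact (csInf_le hbdd ⟨⟨hat, htc.le.trans hcS.1.2⟩, not_lt.1 h⟩).not_gt htc
  have hac : a < c := by
    refine lt_of_le_of_ne hcS.1.1 fun h => ?_
    have : 0 ≤ f c := hcS.2
    rw [← h] at this
    exact this.not_gt ha
  refine ⟨c, hac, hcS.1.2, ?_, hbefore⟩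
  by_contra hne
  have hpos : 0 < f c := lt_of_le_of_ne hcS.2 (Ne.symm hne)
  obtain ⟨t, ht, hft⟩ := intermediate_value_Icc hcS.1.1
    (hf.mono (Set.Icc_subset_Icc_right hcS.1.2)) ⟨ha.le, hpos.le⟩
  rcases ht.2.eq_or_lt with h | h
  · rw [h] at hft; exact hne hft
  · exact (hbefore t ht.1 h).ne hft

theorem deriv_nonneg_of_neg_left {f : ℝ → ℝ} {a c d : ℝ} (hac : a < c) (hfc : f c = 0)
    (hneg : ∀ t, a ≤ t → t < c → f t < 0) (hd : HasDerivAt f d c) : 0 ≤ d := by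
  have h := (hasDerivAt_iff_tendsto_slope.1 hd).mono_left
    (nhdsWithin_mono c (fun t (ht : t < c) => ht.ne) : 𝓝[<] c ≤ 𝓝[≠] c)
  refine ge_of_tendsto h ?_
  filter_upwards [Ioo_mem_nhdsLT hac] with t ht
  rw [slope_def_field, hfc]
  exact (div_pos_of_neg_of_neg (by linarith [hneg t ht.1.le ht.2]) (by linarith [ht.2])).le

/-- At every zero of `H` along the curve, `H_u` is positive. -/
theorem Vf_pos_of_Hf_eq_zero {z b : ℝ} (hz0 : 0 ≤ z) (hz1 : z ≤ 1 / 2) (hb : 0 < b)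
    (hHb : Hf z b = 0) : 0 < Vf z b := by
  by_contra hVb
  have hcH : ∀ y : ℝ, 0 < y → ContinuousAt (Hf z) y := fun y hy =>
    (hasDerivAt_Hf hz0 hz1 hy).continuousAt
  have hcV : ∀ y : ℝ, 0 < y → ContinuousAt (Vf z) y := fun y hy => continuousAt_Vf hz0 hz1 hy
  have hVb : Vf z b < 0 := by
    refine lt_of_le_of_ne (not_lt.1 hVb) fun h => ?_
    have := Kf_mul_Vf_pos hz0 hz1 hb hHb
    simp [h] at this
  have hyP : ∀ y : ℝ, 0 < y → 0 < y * (y ^ 2 - 2 * y * z + 1) := fun y hy =>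
    mul_pos hy (P_pos hz0 hz1 y)
  obtain ⟨a, ⟨hHa, hVa⟩, ha0, hab⟩ :=
    ((eventually_neg hz0 hz1).and (Ioo_mem_nhdsGT hb)).exists
  -- The first zero `c` of `H`; there `H` is increasing, so `K` and hence `H_u` is positive.
  obtain ⟨c, hac, hcb, hHc, hHneg⟩ := exists_first_zero hab.le
    (fun t ht => (hcH t (ha0.trans_le ht.1)).continuousWithinAt) hHa hHb.ge
  have hc0 := ha0.trans hac
  have hKc : 0 ≤ Kf z c := by
    have := deriv_nonneg_of_neg_left hac hHc hHneg (hasDerivAt_Hf hz0 hz1 hc0)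
    exact not_lt.1 fun hK => (div_neg_of_neg_of_pos hK (hyP c hc0)).not_ge this
  have hVc : 0 < Vf z c := pos_of_mul_pos_right (Kf_mul_Vf_pos hz0 hz1 hc0 hHc) hKc
  -- If `R ≤ 0` up to `c`, then `H_u² = disc + 4 R H > 0` there and `H_u` could not change sign.
  have hRc : 0 < Rf z c := by
    by_contra hR
    obtain ⟨t, ⟨hat, htc⟩, hVt⟩ := intermediate_value_Icc hac.le
      (fun t ht => (hcV t (ha0.trans_le ht.1)).continuousWithinAt) ⟨hVa.le, hVc.le⟩
    have ht0 := ha0.trans_le hat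
    have hRt : Rf z t ≤ 0 := not_lt.1 fun h => hR (Rf_pos_mono hz0 hz1 ht0 htc h)
    have hHt : Hf z t ≤ 0 := by
      rcases htc.eq_or_lt with h | h
      · rw [h, hHc]
      · exact (hHneg t hat h).le
    have h1 := Vf_sq z t
    have h2 := discC_pos (1 - z * t) (P_pos hz0 hz1 t)
    have h3 := mul_nonneg_of_nonpos_of_nonpos hRt hHt
    rw [hVt] at h1
    nlinarith
  -- The first zero `d` of `H_u` after `c`; since `R > 0`, there `H < 0`.
  obtain ⟨d, hcd, hdb, hVd, hVpos⟩ := exists_first_zero (f := fun t => -Vf z t) hcb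
    (fun t ht => (hcV t (hc0.trans_le ht.1)).neg.continuousWithinAt) (by simpa using hVc)
    (by simpa using hVb.le)
  have hd0 := hc0.trans hcd
  have hVd : Vf z d = 0 := by simpa using hVd
  have hHd : Hf z d < 0 := by
    by_contra hH
    have hRd := Rf_pos_mono hz0 hz1 hc0 hcd.le hRc
    have h1 := Vf_sq z d
    have h2 := discC_pos (1 - z * d) (P_pos hz0 hz1 d)
    have h3 := mul_nonneg hRd.le (not_lt.1 hH)
    rw [hVd] at h1
    nlinarith
  -- The last zero `-m` of `H` before `d`; there `H` is decreasing, so `K` and hence `H_u`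
  -- is negative, although `H_u > 0` on `[c, d)`.
  obtain ⟨m, hdm, hmc, hHm, hHneg'⟩ := exists_first_zero (f := fun t => Hf z (-t))
    (a := -d) (b := -c) (by linarith)
    (fun t ht => ((hcH (-t) (by linarith [ht.2])).comp
      (f := fun t : ℝ => -t) continuous_neg.continuousAt).continuousWithinAt)
    (by simpa using hHd) (by simp [hHc])
  have hm0 : 0 < -m := by linarith
  have hder : HasDerivAt (fun t => Hf z (-t))
      (-(Kf z (-m) / (-m * ((-m) ^ 2 - 2 * (-m) * z + 1)))) m := by
    have := (hasDerivAt_Hf hz0 hz1 hm0).comp m (hasDerivAt_neg m)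
    exact this.congr_deriv (by ring)
  have hKm : Kf z (-m) ≤ 0 := by
    have h := deriv_nonneg_of_neg_left hdm hHm hHneg' hder
    by_contra hK
    have := div_pos (not_le.1 hK) (hyP _ hm0)
    linarith
  have hVm : 0 < Vf z (-m) := by
    have := hVpos (-m) (by linarith) (by linarith)
    linarith
  have := Kf_mul_Vf_pos hz0 hz1 hm0 hHm
  nlinarith

/-- For `0 ≤ z ≤ 1/2`, the function `j_z` has no interior local maximum:
there is no `y > 0` with `j_z'(y) = 0` and `j_z''(y) ≤ 0`. -/
theorem stmt_18 (z : ℝ) (hz0 : 0 ≤ z) (hz1 : z ≤ 1 / 2) (y : ℝ) (hy : 0 < y) :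
    ¬(deriv (j z) y = 0 ∧ deriv (deriv (j z)) y ≤ 0) := by
  rintro ⟨h1, h2⟩
  have hU := U_pos hz0 hz1 hy
  have hP := P_pos hz0 hz1 y
  have hH : Hf z y = 0 := by
    rw [(hasDerivAt_j hz0 hz1 hy).deriv] at h1
    exact (mul_eq_zero.1 h1).resolve_left (by positivity)
  have he : deriv (j z) =ᶠ[𝓝 y] fun t => 4 * U z t / t * Hf z t :=
    (eventually_gt_nhds hy).mono fun t ht => (hasDerivAt_j hz0 hz1 ht).deriv
  have hd := (((hasDerivAt_U hz0 hz1 hy).const_mul 4).div (hasDerivAt_id' y) hy.ne').mul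
    (hasDerivAt_Hf hz0 hz1 hy)
  have hd' : deriv (deriv (j z)) y
      = 4 * U z y / y * (Kf z y / (y * (y ^ 2 - 2 * y * z + 1))) := by
    rw [(hd.congr_of_eventuallyEq he).deriv]
    simp [hH]
  have hK : 0 < Kf z y := pos_of_mul_pos_left (Kf_mul_Vf_pos hz0 hz1 hy hH)
    (Vf_pos_of_Hf_eq_zero hz0 hz1 hy hH).le
  rw [hd'] at h2
  have : 0 < 4 * U z y / y * (Kf z y / (y * (y ^ 2 - 2 * y * z + 1))) := by positivity
  linarith
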